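/- Every width-w decision list on n variables can be ε-approximated under the uniform distribution by a function depending on at most k = (2 + (1/w)·log_2(1/ε))^{Cw} variables, for an absolute constant C. -/

import Mathlib

open Finset
open scoped Classical BigOperators

noncomputable section

/-- A term over `n` Boolean variables, given as a partial assignment:
`C i = some b` means the literal `x i = b` appears in the term. -/
abbrev Term (n : ℕ) := Fin n → Option Bool

/-- Satisfaction of a term by an assignment. -/
def TermSat {n : ℕ} (C : Term n) (x : Fin n → Bool) : Prop :=
  ∀ i b, C i = some b → x i = b

/-- Width of a term: the number of variables it mentions. -/
def termWidth {n : ℕ} (C : Term n) : ℕ :=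
  (Finset.univ.filter fun i => C i ≠ none).card

/-- The index function of a decision list with terms `C`:
the first index whose term is satisfied by `x` (and `m` conventionally if none,
since `sInf ∅ = 0`; the default rule hypothesis makes the set nonempty). -/
def DLind {n m : ℕ} (C : Fin m → Term n) (x : Fin n → Bool) : ℕ :=
  sInf {i : ℕ | ∃ h : i < m, TermSat (C ⟨i, h⟩) x}

/-- Evaluation of a decision list with terms `C` and values `v`. -/
def DLeval {n m : ℕ} {V : Type} [Inhabited V] (C : Fin m → Term n)
    (v : Fin m → V) (x : Fin n → Bool) : V :=
  if h : DLind C x < m then v ⟨DLind C x, h⟩ else default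

/-- Probability of an event under the uniform distribution on `{0,1}^n`. -/
def pr (n : ℕ) (P : (Fin n → Bool) → Prop) : ℝ :=
  ((Finset.univ.filter P).card : ℝ) / 2 ^ n

/-- Hit probability of index `i` in the decision list with terms `C`. -/
def pL {n m : ℕ} (C : Fin m → Term n) (i : ℕ) : ℝ :=
  pr n fun x => DLind C x = i

/-- The index function of the sub-decision-list `L|_J`. -/
def DLindSub {n m : ℕ} (C : Fin m → Term n) (J : Finset (Fin m)) (x : Fin n → Bool) : ℕ :=
  sInf {i : ℕ | ∃ h : i < m, (⟨i, h⟩ : Fin m) ∈ J ∧ TermSat (C ⟨i, h⟩) x}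

/-- Evaluation of the sub-decision-list `L|_J`. -/
def DLevalSub {n m : ℕ} {V : Type} [Inhabited V] (C : Fin m → Term n) (v : Fin m → V)
    (J : Finset (Fin m)) (x : Fin n → Bool) : V :=
  if h : DLindSub C J x < m then v ⟨DLindSub C J x, h⟩ else default

/-- A restriction: `some b` fixes a coordinate to `b`, `none` is a star. -/
abbrev Restriction (n : ℕ) := Fin n → Option Bool

/-- `x` is a completion of the restriction `ρ`. -/
def Compatible {n : ℕ} (ρ : Restriction n) (x : Fin n → Bool) : Prop :=
  ∀ i b, ρ i = some b → x i = b

/-- Number of stars of a restriction. -/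
def stars {n : ℕ} (ρ : Restriction n) : ℕ :=
  (Finset.univ.filter fun i => ρ i = none).card

/-- Weight of a restriction under the product distribution `U(n, α)`:
each coordinate independently `*` with probability `α`, and `0` or `1`
each with probability `(1-α)/2`. -/
def restW {n : ℕ} (α : ℝ) (ρ : Restriction n) : ℝ :=
  ∏ i : Fin n, if ρ i = none then α else (1 - α) / 2

/-- Index `i` is useful in the restricted decision list `L↾ρ`: some completion
of `ρ` hits rule `i`. -/
def Useful {n m : ℕ} (C : Fin m → Term n) (ρ : Restriction n) (i : Fin m) : Prop :=
  ∃ x, Compatible ρ x ∧ DLind C x = i.val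

/-- Number of useful indices of `L↾ρ`. -/
def useNum {n m : ℕ} (C : Fin m → Term n) (ρ : Restriction n) : ℕ :=
  (Finset.univ.filter fun i : Fin m => Useful C ρ i).card

/-- `q_L(α, i)`: probability over `ρ ~ U(n, α)` that index `i` is useful in `L↾ρ`. -/
def qL {n m : ℕ} (C : Fin m → Term n) (α : ℝ) (i : Fin m) : ℝ :=
  ∑ ρ : Restriction n, restW α ρ * (if Useful C ρ i then 1 else 0)

/-- Transition weight of the `β`-noise on a single bit. -/
def noiseW (β : ℝ) (a b : Bool) : ℝ := if a = b then (1 + β) / 2 else (1 - β) / 2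

/-- Joint density of `(x, y)` where `x` is uniform and `y ~ N_β(x)`. -/
def pairW {n : ℕ} (β : ℝ) (x y : Fin n → Bool) : ℝ :=
  (1 / 2) ^ n * ∏ i : Fin n, noiseW β (x i) (y i)

/-- `Stab_L(β, i) = Pr[Ind L(x) = Ind L(y) = i]` for `x` uniform, `y ~ N_β(x)`. -/
def StabInd {n m : ℕ} (C : Fin m → Term n) (β : ℝ) (i : Fin m) : ℝ :=
  ∑ x : Fin n → Bool, ∑ y : Fin n → Bool,
    pairW β x y * (if DLind C x = i.val ∧ DLind C y = i.val then 1 else 0)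

/-- `Stab_β(g) = Pr[g(x) = g(y) = 1]` for `x` uniform, `y ~ N_β(x)`. -/
def stab {n : ℕ} (β : ℝ) (g : (Fin n → Bool) → Bool) : ℝ :=
  ∑ x : Fin n → Bool, ∑ y : Fin n → Bool,
    pairW β x y * (if g x = true ∧ g y = true then 1 else 0)

/-- Probability weight that a uniform completion of `ρ` equals `x`. -/
def compW {n : ℕ} (ρ : Restriction n) (x : Fin n → Bool) : ℝ :=
  if Compatible ρ x then (1 / 2) ^ stars ρ else 0

/-- Evaluation of a DNF with terms `T`. -/
def DNFeval {n M : ℕ} (T : Fin M → Term n) (x : Fin n → Bool) : Prop :=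
  ∃ t, TermSat (T t) x

/-!
Let `P i` be the event that rule `i` is hit, and draw a random restriction `ρ` fixing each
coordinate with probability `β`. Call `i` pinned by `ρ` if `ρ` fixes every literal of the term `C i`
and some completion of `ρ` hits rule `i`. At most one rule is pinned, since a completion of `ρ`
hitting one pinned rule satisfies the term of the other. On the other hand, a coordinatewise
induction on the cube shows that rule `i` is pinned with probability at least
`(β / 2) ^ w * (pr n (P i)) ^ β`. Hence `∑ i, (pL C i) ^ β ≤ (2 / β) ^ w`: the hit probabilities are
concentrated on few rules. Keeping only the rules hit with probability at least a threshold `δ`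
gives the junta, with `β = 1 / T` and `δ = (ε / (2 * T) ^ w) ^ 2` for `T = 2 + log₂ (1 / ε) / w`.
-/

section RealInequalities

lemma half_add_rpow_le {a b β : ℝ} (hb : 0 ≤ b) (hba : b ≤ a) (hβ : 0 < β) (hβ1 : β ≤ 1) :
    ((a + b) / 2) ^ β ≤ (1 - β) * a ^ β + β / 2 * (a ^ β + b ^ β) := by
  obtain rfl | ha := (hb.trans hba).eq_or_lt
  · simp [le_antisymm hba hb, Real.zero_rpow hβ.ne']
  have hpos : 0 < a ^ (1 - β) := Real.rpow_pos_of_pos ha _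
  have ha_split : a ^ β * a ^ (1 - β) = a := by
    rw [← Real.rpow_add ha, add_sub_cancel, Real.rpow_one]
  have hb_le : b ≤ b ^ β * a ^ (1 - β) := calc
    b = b ^ β * b ^ (1 - β) := by
      rw [← Real.rpow_add' hb (by norm_num), add_sub_cancel, Real.rpow_one]
    _ ≤ b ^ β * a ^ (1 - β) := by gcongr
  refine le_of_mul_le_mul_right ?_ hpos
  calc ((a + b) / 2) ^ β * a ^ (1 - β)
      ≤ β * ((a + b) / 2) + (1 - β) * a :=
        Real.geom_mean_le_arith_mean2_weighted hβ.le (by linarith) (by linarith) ha.le (by ring)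
    _ ≤ (1 - β) * a + β / 2 * (a + b ^ β * a ^ (1 - β)) := by nlinarith
    _ = ((1 - β) * a ^ β + β / 2 * (a ^ β + b ^ β)) * a ^ (1 - β) := by
        linear_combination -(1 - β / 2) * ha_split

lemma half_sum_bool_rpow_le {p : Bool → ℝ} {b₀ : Bool} {β : ℝ} (hp : ∀ b, 0 ≤ p b)
    (hmax : ∀ b, p b ≤ p b₀) (hβ : 0 < β) (hβ1 : β ≤ 1) :
    ((∑ b, p b) / 2) ^ β ≤ (1 - β) * p b₀ ^ β + β / 2 * ∑ b, p b ^ β := by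
  have h := half_add_rpow_le (hp !b₀) (hmax !b₀) hβ hβ1
  cases b₀ <;> simpa [Fintype.sum_bool, add_comm] using h

variable {ι : Type*} {s : Finset ι} {a : ι → ℝ} {β δ M : ℝ}

lemma card_filter_le_of_sum_rpow_le (ha : ∀ i ∈ s, 0 ≤ a i) (hβ : 0 ≤ β) (hδ : 0 < δ)
    (hM : ∑ i ∈ s, a i ^ β ≤ M) : ((s.filter fun i => δ ≤ a i).card : ℝ) ≤ M * δ ^ (-β) := by
  rw [Real.rpow_neg hδ.le, ← div_eq_mul_inv, le_div_iff₀ (Real.rpow_pos_of_pos hδ β)]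
  calc ((s.filter fun i => δ ≤ a i).card : ℝ) * δ ^ β
      = ∑ i ∈ s with δ ≤ a i, δ ^ β := by rw [sum_const, nsmul_eq_mul]
    _ ≤ ∑ i ∈ s with δ ≤ a i, a i ^ β :=
        sum_le_sum fun i hi => Real.rpow_le_rpow hδ.le (mem_filter.1 hi).2 hβ
    _ ≤ ∑ i ∈ s, a i ^ β :=
        sum_le_sum_of_subset_of_nonneg (filter_subset _ _) fun i hi _ =>
          Real.rpow_nonneg (ha i hi) β
    _ ≤ M := hM

lemma sum_filter_lt_le_of_sum_rpow_le (ha : ∀ i ∈ s, 0 ≤ a i) (hβ1 : β ≤ 1) (hδ : 0 ≤ δ)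
    (hM : ∑ i ∈ s, a i ^ β ≤ M) : ∑ i ∈ s with a i < δ, a i ≤ M * δ ^ (1 - β) := by
  have hterm : ∀ i ∈ s, a i < δ → a i ≤ a i ^ β * δ ^ (1 - β) := fun i hi hlt => calc
    a i = a i ^ β * a i ^ (1 - β) := by
      rw [← Real.rpow_add' (ha i hi) (by norm_num), add_sub_cancel, Real.rpow_one]
    _ ≤ a i ^ β * δ ^ (1 - β) := mul_le_mul_of_nonneg_left
        (Real.rpow_le_rpow (ha i hi) hlt.le (by linarith)) (Real.rpow_nonneg (ha i hi) β)
  calc ∑ i ∈ s with a i < δ, a i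
      ≤ ∑ i ∈ s with a i < δ, a i ^ β * δ ^ (1 - β) :=
        sum_le_sum fun i hi => hterm i (mem_filter.1 hi).1 (mem_filter.1 hi).2
    _ ≤ ∑ i ∈ s, a i ^ β * δ ^ (1 - β) :=
        sum_le_sum_of_subset_of_nonneg (filter_subset _ _) fun i hi _ =>
          mul_nonneg (Real.rpow_nonneg (ha i hi) β) (Real.rpow_nonneg hδ _)
    _ ≤ M * δ ^ (1 - β) := by
        rw [← sum_mul]
        exact mul_le_mul_of_nonneg_right hM (Real.rpow_nonneg hδ _)

end RealInequalities

section UniformProbability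

variable {n : ℕ} {P Q : (Fin n → Bool) → Prop}

lemma pr_nonneg (P : (Fin n → Bool) → Prop) : 0 ≤ pr n P := by
  unfold pr; positivity

lemma pr_le_one (P : (Fin n → Bool) → Prop) : pr n P ≤ 1 := by
  refine div_le_one_of_le₀ ?_ (by positivity)
  exact_mod_cast (card_filter_le univ P).trans_eq (by simp)

lemma pr_eq_zero (h : ∀ x, ¬P x) : pr n P = 0 := by
  simp [pr, h]

lemma pr_mono (h : ∀ x, P x → Q x) : pr n P ≤ pr n Q := by
  unfold pr
  gcongr with x _
  exact h x

lemma pr_exists_mem_le_sum {ι : Type*} (J : Finset ι) (E : ι → (Fin n → Bool) → Prop) :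
    pr n (fun x => ∃ i ∈ J, E i x) ≤ ∑ i ∈ J, pr n (E i) := by
  simp only [pr, ← sum_div, ← Nat.cast_sum]
  gcongr
  exact (card_le_card fun x hx => by simpa using hx).trans
    (card_biUnion_le (s := J) (t := fun i => univ.filter (E i)))

lemma pr_succ (P : (Fin (n + 1) → Bool) → Prop) :
    pr (n + 1) P = (∑ b : Bool, pr n fun x => P (Fin.cons b x)) / 2 := by
  simp only [pr, card_filter, Nat.cast_sum, ← sum_div]
  rw [← Equiv.sum_comp (Fin.consEquiv fun _ => Bool), Fintype.sum_prod_type, pow_succ, div_div]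
  rfl

end UniformProbability

section RandomRestriction

variable {n : ℕ} {α : ℝ} {E F : Restriction n → Prop}

lemma restW_nonneg (hα : 0 ≤ α) (hα1 : α ≤ 1) (ρ : Restriction n) : 0 ≤ restW α ρ :=
  prod_nonneg fun i _ => by split_ifs <;> linarith

lemma restW_cons (α : ℝ) (o : Option Bool) (ρ : Restriction n) :
    restW (n := n + 1) α (Fin.cons o ρ) = (if o = none then α else (1 - α) / 2) * restW α ρ := by
  simp [restW, Fin.prod_univ_succ]

lemma sum_restW (n : ℕ) (α : ℝ) : ∑ ρ : Restriction n, restW α ρ = 1 := by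
  have hbit : ∑ o : Option Bool, (if o = none then α else (1 - α) / 2) = 1 := by
    simp [Fintype.sum_option, mul_div_cancel₀]
  simp only [restW]
  rw [← Fintype.sum_pow (fun o : Option Bool => if o = none then α else (1 - α) / 2), hbit, one_pow]

/-- Probability of the event `E` for a random restriction `ρ ~ U(n, α)`. -/
def restPr (α : ℝ) (E : Restriction n → Prop) : ℝ :=
  ∑ ρ, if E ρ then restW α ρ else 0

lemma restPr_nonneg (hα : 0 ≤ α) (hα1 : α ≤ 1) (E : Restriction n → Prop) : 0 ≤ restPr α E :=
  sum_nonneg fun ρ _ => ite_nonneg (restW_nonneg hα hα1 ρ) le_rfl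

lemma restPr_eq_one (α : ℝ) (h : ∀ ρ, E ρ) : restPr α E = 1 := by
  simp [restPr, h, sum_restW]

lemma restPr_mono (hα : 0 ≤ α) (hα1 : α ≤ 1) (h : ∀ ρ, E ρ → F ρ) :
    restPr α E ≤ restPr α F := by
  refine sum_le_sum fun ρ _ => ?_
  have hρ := restW_nonneg hα hα1 ρ
  by_cases hE : E ρ
  · simp [hE, h ρ hE]
  · simpa [hE] using ite_nonneg hρ le_rfl

lemma restPr_succ (α : ℝ) (E : Restriction (n + 1) → Prop) :
    restPr α E = α * restPr α (fun ρ : Restriction n => E (Fin.cons none ρ)) +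
      (1 - α) / 2 * ∑ b : Bool, restPr α fun ρ : Restriction n => E (Fin.cons (some b) ρ) := by
  simp only [restPr, mul_sum, mul_ite, mul_zero]
  rw [← Equiv.sum_comp (Fin.consEquiv fun _ => Option Bool), Fintype.sum_prod_type,
    Fintype.sum_option]
  simp [Fin.consEquiv, restW_cons]

lemma sum_restPr_le_one {ι : Type*} [Fintype ι] (hα : 0 ≤ α) (hα1 : α ≤ 1)
    {E : ι → Restriction n → Prop} (hE : ∀ ρ i j, E i ρ → E j ρ → i = j) :
    ∑ i, restPr α (E i) ≤ 1 := by
  simp only [restPr]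
  rw [sum_comm, ← sum_restW n α]
  refine sum_le_sum fun ρ _ => ?_
  have hcard : (univ.filter fun i => E i ρ).card ≤ 1 :=
    card_le_one.2 fun i hi j hj => hE ρ i j (mem_filter.1 hi).2 (mem_filter.1 hj).2
  rw [← sum_filter, sum_const, nsmul_eq_mul]
  exact mul_le_of_le_one_left (restW_nonneg hα hα1 ρ) (by exact_mod_cast hcard)

end RandomRestriction

section Pinning

variable {n : ℕ} {β : ℝ}

/-- The restriction `ρ` fixes every literal of the term `T` and has a completion in the event `P`.
For `P` the event of hitting a rule with term `T`, this says that the rule is useful in the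
restricted list and its term has become constantly true. -/
def Pins (T : Term n) (P : (Fin n → Bool) → Prop) (ρ : Restriction n) : Prop :=
  (∀ i b, T i = some b → ρ i = some b) ∧ ∃ x, Compatible ρ x ∧ P x

lemma Pins.mono {T : Term n} {P Q : (Fin n → Bool) → Prop} {ρ : Restriction n}
    (h : ∀ x, P x → Q x) (hρ : Pins T P ρ) : Pins T Q ρ :=
  ⟨hρ.1, hρ.2.imp fun x hx => ⟨hx.1, h x hx.2⟩⟩

lemma compatible_cons {o : Option Bool} {ρ : Restriction n} {a : Bool} {x : Fin n → Bool} :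
    Compatible (n := n + 1) (Fin.cons o ρ) (Fin.cons a x) ↔
      (∀ b, o = some b → a = b) ∧ Compatible ρ x := by
  simp [Compatible, Fin.forall_fin_succ]

lemma pins_cons {t o : Option Bool} {T : Term n} {ρ : Restriction n}
    {P : (Fin (n + 1) → Bool) → Prop} :
    Pins (n := n + 1) (Fin.cons t T) P (Fin.cons o ρ) ↔
      (∀ b, t = some b → o = some b) ∧
        Pins T (fun x => ∃ a, (∀ b, o = some b → a = b) ∧ P (Fin.cons a x)) ρ := by
  simp only [Pins, Fin.forall_fin_succ, Fin.exists_fin_succ_pi, Fin.cons_zero, Fin.cons_succ,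
    compatible_cons]
  grind

lemma termWidth_cons (t : Option Bool) (T : Term n) :
    termWidth (n := n + 1) (Fin.cons t T) = (if t = none then 0 else 1) + termWidth T := by
  simp only [termWidth, Fin.card_filter_univ_succ]
  cases t <;> simp [add_comm]

lemma restPr_pins_cons_none (P : (Fin (n + 1) → Bool) → Prop) (T : Term n) :
    restPr (1 - β) (Pins (n := n + 1) (Fin.cons none T) P) =
      (1 - β) * restPr (1 - β) (Pins T fun x => ∃ a, P (Fin.cons a x)) +
        β / 2 * ∑ b : Bool, restPr (1 - β) (Pins T fun x => P (Fin.cons b x)) := by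
  rw [restPr_succ]
  simp [pins_cons]

lemma restPr_pins_cons_some (P : (Fin (n + 1) → Bool) → Prop) (T : Term n) (b : Bool) :
    restPr (1 - β) (Pins (n := n + 1) (Fin.cons (some b) T) P) =
      β / 2 * restPr (1 - β) (Pins T fun x => P (Fin.cons b x)) := by
  rw [restPr_succ]
  cases b <;> simp [pins_cons, restPr]

lemma pow_mul_pr_rpow_le_restPr_pins_cons_none (hβ : 0 < β) (hβ1 : β ≤ 1) {T : Term n}
    {P : (Fin (n + 1) → Bool) → Prop}
    (h : ∀ b, (β / 2) ^ termWidth T * pr n (fun x => P (Fin.cons b x)) ^ β ≤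
      restPr (1 - β) (Pins T fun x => P (Fin.cons b x))) :
    (β / 2) ^ termWidth (n := n + 1) (Fin.cons none T) * pr (n + 1) P ^ β ≤
      restPr (1 - β) (Pins (n := n + 1) (Fin.cons none T) P) := by
  set p : Bool → ℝ := fun b => pr n fun x => P (Fin.cons b x)
  obtain ⟨b₀, hb₀⟩ := Finite.exists_max p
  have hstar : (β / 2) ^ termWidth T * p b₀ ^ β ≤
      restPr (1 - β) (Pins T fun x => ∃ a, P (Fin.cons a x)) :=
    (h b₀).trans <| restPr_mono (by linarith) (by linarith) fun ρ hρ => hρ.mono fun x hx => ⟨b₀, hx⟩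
  rw [pr_succ, termWidth_cons, if_pos rfl, zero_add, restPr_pins_cons_none]
  calc (β / 2) ^ termWidth T * ((∑ b, p b) / 2) ^ β
      ≤ (β / 2) ^ termWidth T * ((1 - β) * p b₀ ^ β + β / 2 * ∑ b, p b ^ β) := by
        gcongr
        exact half_sum_bool_rpow_le (fun b => pr_nonneg _) hb₀ hβ hβ1
    _ = (1 - β) * ((β / 2) ^ termWidth T * p b₀ ^ β) +
          β / 2 * ∑ b, (β / 2) ^ termWidth T * p b ^ β := by
        rw [← mul_sum]; ring
    _ ≤ _ := by
        have : 0 ≤ 1 - β := by linarith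
        gcongr with b
        exact h b

lemma pow_mul_pr_rpow_le_restPr_pins_cons_some (hβ : 0 < β) {T : Term n}
    {P : (Fin (n + 1) → Bool) → Prop} {b : Bool} (hP : ∀ {a} x, P (Fin.cons a x) → a = b)
    (h : (β / 2) ^ termWidth T * pr n (fun x => P (Fin.cons b x)) ^ β ≤
      restPr (1 - β) (Pins T fun x => P (Fin.cons b x))) :
    (β / 2) ^ termWidth (n := n + 1) (Fin.cons (some b) T) * pr (n + 1) P ^ β ≤
      restPr (1 - β) (Pins (n := n + 1) (Fin.cons (some b) T) P) := by
  have hpr : pr (n + 1) P ≤ pr n fun x => P (Fin.cons b x) := by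
    rw [pr_succ, Fintype.sum_eq_single b fun a hab => pr_eq_zero fun x hx => hab (hP x hx)]
    exact half_le_self (pr_nonneg _)
  rw [restPr_pins_cons_some, termWidth_cons, if_neg (Option.some_ne_none b), pow_add, pow_one,
    mul_assoc]
  gcongr
  refine le_trans ?_ h
  gcongr
  exact pr_nonneg P

lemma pow_mul_pr_rpow_le_restPr_pins (hβ : 0 < β) (hβ1 : β ≤ 1) (T : Term n)
    (P : (Fin n → Bool) → Prop) (hP : ∀ x, P x → TermSat T x) :
    (β / 2) ^ termWidth T * pr n P ^ β ≤ restPr (1 - β) (Pins T P) := by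
  induction n with
  | zero =>
    by_cases h : ∃ x, P x
    · obtain ⟨x, hx⟩ := h
      rw [restPr_eq_one _ fun ρ => ⟨fun i => i.elim0, x, fun i => i.elim0, hx⟩]
      exact mul_le_one₀ (pow_le_one₀ (by linarith) (by linarith))
        (Real.rpow_nonneg (pr_nonneg P) β) (Real.rpow_le_one (pr_nonneg P) (pr_le_one P) hβ.le)
    · rw [pr_eq_zero (not_exists.1 h), Real.zero_rpow hβ.ne', mul_zero]
      exact restPr_nonneg (by linarith) (by linarith) _
  | succ n ih =>
    obtain ⟨t, T, rfl⟩ : ∃ t T', T = Fin.cons t T' := ⟨T 0, Fin.tail T, (Fin.cons_self_tail T).symm⟩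
    have hslice (b : Bool) (x : Fin n → Bool) (hx : P (Fin.cons b x)) :
        (∀ c, t = some c → b = c) ∧ TermSat T x := compatible_cons.1 (hP _ hx)
    have ih_slice (b : Bool) := ih T (fun x => P (Fin.cons b x)) fun x hx => (hslice b x hx).2
    cases t with
    | none => exact pow_mul_pr_rpow_le_restPr_pins_cons_none hβ hβ1 ih_slice
    | some b =>
      exact pow_mul_pr_rpow_le_restPr_pins_cons_some hβ (fun x hx => (hslice _ x hx).1 b rfl)
        (ih_slice b)

end Pinning

section DecisionList

variable {n m : ℕ} {C : Fin m → Term n}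

lemma DLind_le {x : Fin n → Bool} {i : Fin m} (hi : TermSat (C i) x) : DLind C x ≤ i :=
  Nat.sInf_le ⟨i.2, hi⟩

lemma exists_DLind_eq {x : Fin n → Bool} (hC : ∃ i, TermSat (C i) x) :
    ∃ i : Fin m, DLind C x = i ∧ TermSat (C i) x := by
  obtain ⟨i, hi⟩ := hC
  obtain ⟨hlt, hsat⟩ := Nat.sInf_mem (s := {i | ∃ h : i < m, TermSat (C ⟨i, h⟩) x}) ⟨i, i.2, hi⟩
  exact ⟨⟨_, hlt⟩, rfl, hsat⟩

lemma termSat_of_DLind_eq {x : Fin n → Bool} (hC : ∃ i, TermSat (C i) x) {i : Fin m}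
    (hi : DLind C x = i) : TermSat (C i) x := by
  obtain ⟨j, hj, hsat⟩ := exists_DLind_eq hC
  rwa [Fin.ext (hi.symm.trans hj)]

lemma pins_DLind_unique {ρ : Restriction n} {i j : Fin m}
    (hi : Pins (C i) (fun x => DLind C x = i) ρ) (hj : Pins (C j) (fun x => DLind C x = j) ρ) :
    i = j := by
  obtain ⟨hfix_i, x, hρx, hx⟩ := hi
  obtain ⟨hfix_j, y, hρy, hy⟩ := hj
  have hji : DLind C x ≤ j := DLind_le fun k b hk => hρx k b (hfix_j k b hk)
  have hij : DLind C y ≤ i := DLind_le fun k b hk => hρy k b (hfix_i k b hk)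
  exact le_antisymm (by omega) (by omega)

theorem sum_pL_rpow_le {w : ℕ} {β : ℝ} (hC : ∀ x, ∃ i, TermSat (C i) x)
    (hw : ∀ j, termWidth (C j) ≤ w) (hβ : 0 < β) (hβ1 : β ≤ 1) :
    ∑ i : Fin m, pL C i ^ β ≤ (2 / β) ^ w := by
  rw [← inv_div, inv_pow, ← one_div, le_div_iff₀' (by positivity), mul_sum]
  have hrule (i : Fin m) : (β / 2) ^ w * pL C i ^ β ≤
      restPr (1 - β) (Pins (C i) fun x => DLind C x = i) := calc
    (β / 2) ^ w * pL C i ^ β ≤ (β / 2) ^ termWidth (C i) * pL C i ^ β :=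
      mul_le_mul_of_nonneg_right (pow_le_pow_of_le_one (by linarith) (by linarith) (hw i))
        (Real.rpow_nonneg (pr_nonneg _) β)
    _ ≤ _ := pow_mul_pr_rpow_le_restPr_pins hβ hβ1 _ _ fun x => termSat_of_DLind_eq (hC x)
  exact (sum_le_sum fun i _ => hrule i).trans <|
    sum_restPr_le_one (by linarith) (by linarith) fun ρ i j => pins_DLind_unique

/-- The coordinates read by the terms with index in `J`. -/
def termVars (C : Fin m → Term n) (J : Finset (Fin m)) : Finset (Fin n) :=
  J.biUnion fun j => univ.filter fun i => C j i ≠ none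

lemma card_termVars_le {w : ℕ} {J : Finset (Fin m)} (hw : ∀ j ∈ J, termWidth (C j) ≤ w) :
    (termVars C J).card ≤ J.card * w :=
  card_biUnion_le_card_mul J _ w hw

lemma TermSat.congr {T : Term n} {x y : Fin n → Bool} (hxy : ∀ i, T i ≠ none → x i = y i)
    (hx : TermSat T x) : TermSat T y :=
  fun i b hi => (hxy i (by simp [hi])).symm.trans (hx i b hi)

variable {V : Type} [Inhabited V] {v : Fin m → V} {J : Finset (Fin m)}

lemma DLindSub_congr {x y : Fin n → Bool} (hxy : ∀ i ∈ termVars C J, x i = y i) :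
    DLindSub C J x = DLindSub C J y := by
  have hvars (j : Fin m) (hj : j ∈ J) (i : Fin n) (hi : C j i ≠ none) : x i = y i :=
    hxy i (mem_biUnion.2 ⟨j, hj, by simpa using hi⟩)
  unfold DLindSub
  congr 1
  ext i
  exact exists_congr fun h => and_congr_right fun hi =>
    ⟨TermSat.congr (hvars _ hi), TermSat.congr fun k hk => (hvars _ hi k hk).symm⟩

lemma DLevalSub_congr {x y : Fin n → Bool} (hxy : ∀ i ∈ termVars C J, x i = y i) :
    DLevalSub C v J x = DLevalSub C v J y := by
  simp only [DLevalSub, DLindSub_congr hxy]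

lemma DLindSub_eq_DLind {x : Fin n → Bool} {i : Fin m} (hi : DLind C x = i)
    (hsat : TermSat (C i) x) (hJ : i ∈ J) : DLindSub C J x = DLind C x := by
  refine le_antisymm (hi ▸ Nat.sInf_le ⟨i.2, hJ, hsat⟩) ?_
  obtain ⟨hlt, -, hsat'⟩ :=
    Nat.sInf_mem (s := {i | ∃ h : i < m, ⟨i, h⟩ ∈ J ∧ TermSat (C ⟨i, h⟩) x}) ⟨i, i.2, hJ, hsat⟩
  exact DLind_le (i := ⟨_, hlt⟩) hsat'

lemma pr_DLeval_ne_DLevalSub_le (hC : ∀ x, ∃ i, TermSat (C i) x) :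
    pr n (fun x => DLeval C v x ≠ DLevalSub C v J x) ≤ ∑ i ∈ Jᶜ, pL C i := by
  refine le_trans (pr_mono fun x hx => ?_)
    (pr_exists_mem_le_sum Jᶜ fun (i : Fin m) x => DLind C x = i)
  obtain ⟨i, hi, hsat⟩ := exists_DLind_eq (hC x)
  refine ⟨i, mem_compl.2 fun hJ => hx ?_, hi⟩
  simp only [DLeval, DLevalSub, DLindSub_eq_DLind hi hsat hJ]

theorem exists_junta_of_threshold {w : ℕ} {β δ : ℝ} (v : Fin m → V)
    (hC : ∀ x, ∃ i, TermSat (C i) x) (hw : ∀ j, termWidth (C j) ≤ w)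
    (hβ : 0 < β) (hβ1 : β ≤ 1) (hδ : 0 < δ) :
    ∃ (S : Finset (Fin n)) (g : (Fin n → Bool) → V),
      (S.card : ℝ) ≤ w * ((2 / β) ^ w * δ ^ (-β)) ∧
      (∀ x y : Fin n → Bool, (∀ i ∈ S, x i = y i) → g x = g y) ∧
      pr n (fun x => DLeval C v x ≠ g x) ≤ (2 / β) ^ w * δ ^ (1 - β) := by
  let J : Finset (Fin m) := univ.filter fun i => δ ≤ pL C i
  have hpL : ∀ i ∈ univ, 0 ≤ pL C (i : Fin m) := fun i _ => pr_nonneg _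
  have hsum : ∑ i : Fin m, pL C i ^ β ≤ (2 / β) ^ w := sum_pL_rpow_le hC hw hβ hβ1
  have hJcompl : Jᶜ = univ.filter fun i : Fin m => pL C i < δ := by
    simp only [J, compl_filter, not_le]
  refine ⟨termVars C J, DLevalSub C v J, ?_, fun x y => DLevalSub_congr, ?_⟩
  · calc ((termVars C J).card : ℝ) ≤ w * J.card := by
          rw [mul_comm]; exact_mod_cast card_termVars_le fun j _ => hw j
      _ ≤ _ := by gcongr; exact card_filter_le_of_sum_rpow_le hpL hβ.le hδ hsum
  · refine (pr_DLeval_ne_DLevalSub_le hC).trans ?_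
    rw [hJcompl]
    exact sum_filter_lt_le_of_sum_rpow_le hpL hβ1 hδ.le hsum

end DecisionList

section ChoiceOfParameters

variable {A ε T : ℝ} {w : ℕ}

lemma sq_div_rpow_one_sub_le (hε : 0 < ε) (hεA : ε ≤ A) (hT : 2 ≤ T) :
    ((ε / A) ^ 2) ^ (1 - 1 / T) ≤ ε / A := by
  have hA : 0 < A := hε.trans_le hεA
  have hT_inv : 1 / T ≤ 1 / 2 := one_div_le_one_div_of_le two_pos hT
  rw [← Real.rpow_natCast, ← Real.rpow_mul (by positivity)]
  exact (Real.rpow_le_rpow_of_exponent_ge (by positivity) (div_le_one_of_le₀ hεA hA.le)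
    (by push_cast; linarith)).trans_eq (Real.rpow_one _)

lemma sq_div_rpow_neg_le (hA : 1 ≤ A) (hε : 0 < ε) (hT : 2 ≤ T)
    (hεT : 1 / ε ≤ 2 ^ (w * T)) : ((ε / A) ^ 2) ^ (-(1 / T)) ≤ A * 4 ^ w := by
  have hT0 : 0 < T := by linarith
  have : 0 < A := by linarith
  calc ((ε / A) ^ 2) ^ (-(1 / T)) = A ^ (2 / T) * (1 / ε) ^ (2 / T) := by
        rw [← Real.mul_rpow (by positivity) (by positivity), mul_one_div, ← inv_div A ε,
          Real.rpow_neg (by positivity), ← Real.inv_rpow (by positivity), inv_pow, inv_inv,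
          ← Real.rpow_natCast, ← Real.rpow_mul (by positivity), Nat.cast_ofNat, mul_one_div]
    _ ≤ A ^ (1 : ℝ) * (2 ^ (w * T)) ^ (2 / T) := by
        gcongr
        exact div_le_one_of_le₀ hT hT0.le
    _ = A * 4 ^ w := by
        rw [Real.rpow_one, ← Real.rpow_mul zero_le_two, show w * T * (2 / T) = 2 * (w : ℝ) by
          field_simp, Real.rpow_mul zero_le_two, Real.rpow_natCast]
        norm_num

lemma width_mul_pow_le_rpow (hT : 2 ≤ T) :
    w * ((2 * T) ^ w * ((2 * T) ^ w * 4 ^ w)) ≤ T ^ (7 * w : ℝ) := by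
  have hbase : 32 * T ^ 2 ≤ T ^ 7 := calc
    32 * T ^ 2 = 2 ^ 5 * T ^ 2 := by norm_num
    _ ≤ T ^ 5 * T ^ 2 := by gcongr
    _ = T ^ 7 := by ring
  have hw : (w : ℝ) ≤ 2 ^ w := by exact_mod_cast Nat.lt_two_pow_self.le
  calc w * ((2 * T) ^ w * ((2 * T) ^ w * 4 ^ w))
      ≤ 2 ^ w * ((2 * T) ^ w * ((2 * T) ^ w * 4 ^ w)) := by gcongr
    _ = (32 * T ^ 2) ^ w := by
        simp only [← mul_pow]; ring
    _ ≤ (T ^ 7) ^ w := by gcongr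
    _ = T ^ (7 * w : ℝ) := by
        rw [← pow_mul]; exact_mod_cast (Real.rpow_natCast T (7 * w)).symm

lemma one_div_le_two_rpow_mul (hw : 1 ≤ w) (hε : 0 < ε) :
    1 / ε ≤ 2 ^ (w * (2 + Real.logb 2 (1 / ε) / w)) := by
  have hw0 : (0 : ℝ) < w := by exact_mod_cast hw
  rw [← Real.logb_le_iff_le_rpow one_lt_two (by positivity), mul_add, mul_div_cancel₀ _ hw0.ne']
  linarith

end ChoiceOfParameters

theorem junta_approximation_general (n m w : ℕ) (V : Type) [Inhabited V] (C : Fin m → Term n)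
    (v : Fin m → V) (ε : ℝ) (hw : 1 ≤ w) (hε : 0 < ε) (hε1 : ε ≤ 1)
    (hwidth : ∀ j, termWidth (C j) ≤ w) (hC : ∀ x, ∃ i, TermSat (C i) x) :
    ∃ (S : Finset (Fin n)) (g : (Fin n → Bool) → V),
      (S.card : ℝ) ≤ (2 + Real.logb 2 (1 / ε) / w) ^ (7 * w : ℝ) ∧
      (∀ x y : Fin n → Bool, (∀ i ∈ S, x i = y i) → g x = g y) ∧
      pr n (fun x => DLeval C v x ≠ g x) ≤ ε := by
  have hεT := one_div_le_two_rpow_mul hw hε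
  have hlog : 0 ≤ Real.logb 2 (1 / ε) := Real.logb_nonneg one_lt_two (one_le_one_div hε hε1)
  have hT : 2 ≤ 2 + Real.logb 2 (1 / ε) / w := le_add_of_nonneg_right (by positivity)
  generalize 2 + Real.logb 2 (1 / ε) / w = T at hεT hT ⊢
  have hA : 1 ≤ (2 * T) ^ w := one_le_pow₀ (by linarith)
  obtain ⟨S, g, hcard, hjunta, herr⟩ := exists_junta_of_threshold (β := 1 / T)
    (δ := (ε / (2 * T) ^ w) ^ 2) v hC hwidth (by positivity)
    (div_le_one_of_le₀ (by linarith) (by linarith)) (by positivity)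
  rw [show 2 / (1 / T) = 2 * T by field_simp] at hcard herr
  refine ⟨S, g, hcard.trans ?_, hjunta, herr.trans ?_⟩
  · refine le_trans ?_ (width_mul_pow_le_rpow hT)
    gcongr
    exact sq_div_rpow_neg_le hA hε hT hεT
  · calc (2 * T) ^ w * ((ε / (2 * T) ^ w) ^ 2) ^ (1 - 1 / T)
        ≤ (2 * T) ^ w * (ε / (2 * T) ^ w) := by
          gcongr
          exact sq_div_rpow_one_sub_le hε (hε1.trans hA) hT
      _ = ε := mul_div_cancel₀ ε (by positivity)

theorem junta_approximation :
    ∃ K : ℝ, 0 < K ∧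
      ∀ (n m w : ℕ) (V : Type) (_ : Inhabited V)
        (C : Fin m → Term n) (v : Fin m → V) (ε : ℝ),
        1 ≤ w → 0 < ε → ε ≤ 1 →
        (∀ j, termWidth (C j) ≤ w) →
        ∀ (hm : 0 < m), C ⟨m - 1, Nat.sub_lt hm one_pos⟩ = (fun _ => none) →
        ∃ (S : Finset (Fin n)) (g : (Fin n → Bool) → V),
          (S.card : ℝ) ≤ (2 + Real.logb 2 (1 / ε) / w) ^ (K * w) ∧
          (∀ x y : Fin n → Bool, (∀ i ∈ S, x i = y i) → g x = g y) ∧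
          pr n (fun x => DLeval C v x ≠ g x) ≤ ε := by
  refine ⟨7, by norm_num, fun n m w V _ C v ε hw hε hε1 hwidth hm hC => ?_⟩
  exact junta_approximation_general n m w V C v ε hw hε hε1 hwidth fun x =>
    ⟨⟨m - 1, Nat.sub_lt hm one_pos⟩, by simp [hC, TermSat]⟩
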